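/- Let p : ℕ×ℕ → ℕ be finitely supported and suppose p(a,b) ≥ p(a+1,b) and p(a,b) ≥ p(a,b+1) for all a,b ∈ ℕ. Then Σ_{a,b ≥ 0} (p(a,b) − p(a+1,b) − p(a,b+1) + p(a+1,b+1))² ≥ p(0,0), where the second differences are computed in ℤ and the sum is finite because p is finitely supported. -/

import Mathlib

/-!
Telescoping in each variable, the mixed second differences of a finitely supported integer array sum
to its corner value, and an integer is at most its square.
-/

section Telescoping

open Function

variable {G : Type*} [AddCommGroup G]

theorem finsum_sub_succ {f : ℕ → G} (hf : f.HasFiniteSupport) :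
    ∑ᶠ n, (f n - f (n + 1)) = f 0 := by
  obtain ⟨N, hN⟩ := hf.toFinset.exists_nat_subset_range
  have f_eq_zero {n : ℕ} (hn : N ≤ n) : f n = 0 := by
    by_contra h
    have hlt : n < N := Finset.mem_range.mp (hN (hf.mem_toFinset.mpr h))
    omega
  have support_subset : support (fun n => f n - f (n + 1)) ⊆ Finset.range N :=
    support_subset_iff'.mpr fun n hn => by
      have hle : N ≤ n := by simpa using hn
      rw [f_eq_zero hle, f_eq_zero (Nat.le_succ_of_le hle), sub_zero]
  rw [finsum_eq_sum_of_support_subset _ support_subset, Finset.sum_range_sub', f_eq_zero le_rfl,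
    sub_zero]

/-- The mixed second difference of a doubly indexed array, with the sign that makes it the
composite of the operators `g ↦ (n ↦ g n - g (n + 1))` in the two variables. -/
def mixedDiff (f : ℕ × ℕ → G) (x : ℕ × ℕ) : G :=
  f (x.1, x.2) - f (x.1 + 1, x.2) - f (x.1, x.2 + 1) + f (x.1 + 1, x.2 + 1)

theorem hasFiniteSupport_mixedDiff {f : ℕ × ℕ → G} (hf : f.HasFiniteSupport) :
    (mixedDiff f).HasFiniteSupport := by
  have shift (i j : ℕ) : (fun x : ℕ × ℕ => f (x.1 + i, x.2 + j)).HasFiniteSupport :=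
    hf.fun_comp_of_injective ((add_left_injective i).prodMap (add_left_injective j))
  exact (((shift 0 0).fun_sub (shift 1 0)).fun_sub (shift 0 1)).fun_add (shift 1 1)

theorem finsum_mixedDiff {f : ℕ × ℕ → G} (hf : f.HasFiniteSupport) :
    ∑ᶠ x, mixedDiff f x = f (0, 0) := by
  have row (a : ℕ) : (fun b => f (a, b)).HasFiniteSupport :=
    hf.fun_comp_of_injective (Prod.mk_right_injective a)
  have column (b : ℕ) : (fun a => f (a, b)).HasFiniteSupport :=
    hf.fun_comp_of_injective (Prod.mk_left_injective b)
  calc ∑ᶠ x, mixedDiff f x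
      = ∑ᶠ a, ∑ᶠ b, mixedDiff f (a, b) := finsum_curry _ (hasFiniteSupport_mixedDiff hf)
    _ = ∑ᶠ a, ∑ᶠ b, ((f (a, b) - f (a + 1, b)) - (f (a, b + 1) - f (a + 1, b + 1))) :=
        finsum_congr fun a => finsum_congr fun b => by unfold mixedDiff; abel
    _ = ∑ᶠ a, (f (a, 0) - f (a + 1, 0)) :=
        finsum_congr fun a => finsum_sub_succ ((row a).fun_sub (row (a + 1)))
    _ = f (0, 0) := finsum_sub_succ (column 0)

end Telescoping

theorem stmt1_general (p : (ℕ × ℕ) →₀ ℤ) :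
    p (0, 0) ≤
      ∑ᶠ a : ℕ, ∑ᶠ b : ℕ, (p (a, b) - p (a + 1, b) - p (a, b + 1) + p (a + 1, b + 1)) ^ 2 := by
  have hfin : (mixedDiff p).HasFiniteSupport := hasFiniteSupport_mixedDiff p.hasFiniteSupport
  have hfin_sq : (fun x => mixedDiff p x ^ 2).HasFiniteSupport :=
    hfin.fun_comp (zero_pow two_ne_zero)
  calc p (0, 0)
      = ∑ᶠ x, mixedDiff p x := (finsum_mixedDiff p.hasFiniteSupport).symm
    _ ≤ ∑ᶠ x, mixedDiff p x ^ 2 := finsum_le_finsum' hfin hfin_sq fun x => Int.le_self_sq _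
    _ = ∑ᶠ a, ∑ᶠ b, mixedDiff p (a, b) ^ 2 := finsum_curry _ hfin_sq

/-!
STATEMENT 1. For a finitely supported `p : ℕ×ℕ → ℕ` which is nonincreasing in
each argument, the sum of the squared mixed second differences (computed in ℤ)
is at least `p (0,0)`:
  Σ_{a,b ≥ 0} (p(a,b) − p(a+1,b) − p(a,b+1) + p(a+1,b+1))² ≥ p(0,0).
The (finite) sum is expressed with `∑ᶠ`, which is legitimate since `p` is
finitely supported, hence so is the second difference.
-/

theorem stmt1 (p : (ℕ × ℕ) →₀ ℕ)
    (h1 : ∀ a b : ℕ, p (a + 1, b) ≤ p (a, b))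
    (h2 : ∀ a b : ℕ, p (a, b + 1) ≤ p (a, b)) :
    (p (0, 0) : ℤ) ≤
      ∑ᶠ a : ℕ, ∑ᶠ b : ℕ,
        ((p (a, b) : ℤ) - (p (a + 1, b) : ℤ) - (p (a, b + 1) : ℤ)
          + (p (a + 1, b + 1) : ℤ)) ^ 2 := by
  simpa using stmt1_general (p.mapRange Nat.cast Nat.cast_zero)
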